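/- arXiv:2402.12333 — 7 statements merged into one kernel-verified Lean document; each statement's English description precedes it below -/
import Mathlib

section
/- Let k ≥ 2 be an integer. Then for all positive integers n and all real ε with 0 < ε ≤ (k−1)/6, one has τ_k(n) ≤ min( k^{Ω(n)}, (3(k−1)/(5ε))^{k^{1/ε}(k−1)} · n^ε ). -/
/-- The `k`-fold Piltz divisor function: `piltz k n` is the number of ordered
`k`-tuples of positive integers whose product is `n` (Dirichlet `k`-th power of ζ). -/
def piltz (k n : ℕ) : ℕ := ((ArithmeticFunction.zeta : ArithmeticFunction ℕ) ^ k) n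

theorem piltz_one_prime_pow {p : ℕ} (hp : p.Prime) (a : ℕ) : piltz 1 (p ^ a) = 1 := by
  simp [piltz, hp.ne_zero]

theorem piltz_succ_prime_pow (k : ℕ) {p : ℕ} (hp : p.Prime) (a : ℕ) :
    piltz (k + 1) (p ^ a) = ∑ i ∈ Finset.range (a + 1), piltz k (p ^ i) := by
  rw [piltz, pow_succ, ArithmeticFunction.mul_zeta_apply, Nat.sum_divisors_prime_pow hp]
  rfl

theorem piltz_succ_prime_pow_le_succ_pow (m : ℕ) {p : ℕ} (hp : p.Prime) (a : ℕ) :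
    piltz (m + 1) (p ^ a) ≤ (a + 1) ^ m := by
  induction m generalizing a with
  | zero => simp [piltz_one_prime_pow hp]
  | succ m ih =>
    rw [piltz_succ_prime_pow _ hp, pow_succ']
    refine (Finset.sum_le_card_nsmul _ _ ((a + 1) ^ m) fun i hi => (ih i).trans ?_).trans ?_
    · exact Nat.pow_le_pow_left (by simpa using hi) m
    · simp

theorem piltz_prime_pow_le_pow (k : ℕ) {p : ℕ} (hp : p.Prime) (a : ℕ) :
    piltz k (p ^ a) ≤ k ^ a := by
  induction k generalizing a with
  | zero =>
    rcases a with _ | a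
    · simp [piltz]
    · simp [piltz, hp.ne_one]
  | succ k ih =>
    rw [piltz_succ_prime_pow _ hp, add_pow]
    refine Finset.sum_le_sum fun i hi => (ih i).trans ?_
    have : 0 < a.choose i := Nat.choose_pos (Nat.lt_succ_iff.1 (Finset.mem_range.1 hi))
    simpa using Nat.le_mul_of_pos_right (k ^ i) this

theorem piltz_eq_prod (k : ℕ) {n : ℕ} (hn : n ≠ 0) :
    piltz k n = ∏ p ∈ n.primeFactors, piltz k (p ^ n.factorization p) :=
  (ArithmeticFunction.isMultiplicative_zeta.pow (k := k)).multiplicative_factorization _ hn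

theorem piltz_le_pow_length_primeFactorsList (k : ℕ) {n : ℕ} (hn : n ≠ 0) :
    piltz k n ≤ k ^ n.primeFactorsList.length := by
  have hlen : n.primeFactorsList.length = ∑ p ∈ n.primeFactors, n.factorization p := by
    rw [← ArithmeticFunction.cardFactors_apply,
      ArithmeticFunction.cardFactors_eq_sum_factorization]
    rfl
  rw [piltz_eq_prod k hn, hlen, ← Finset.prod_pow_eq_pow_sum]
  exact Finset.prod_le_prod' fun p hp =>
    piltz_prime_pow_le_pow k (Nat.prime_of_mem_primeFactors hp) _

open Real in
theorem one_add_le_mul_two_rpow {s : ℝ} (hs : 0 < s) (hs' : s ≤ 1 / 6) (x : ℝ) :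
    1 + x ≤ 3 / (5 * s) * 2 ^ (x * s) := by
  have hl := log_two_gt_d9
  have he := exp_one_gt_d9
  have htwo : (2 : ℝ) ^ s ≤ 1.123 := by
    calc (2 : ℝ) ^ s ≤ 2 ^ (1 / 6 : ℝ) := rpow_le_rpow_of_exponent_le (by norm_num) hs'
      _ ≤ ((1.123 : ℝ) ^ (6 : ℕ)) ^ (1 / 6 : ℝ) :=
        rpow_le_rpow (by norm_num) (by norm_num) (by norm_num)
      _ = 1.123 := by
        rw [← rpow_natCast, ← rpow_mul (by norm_num)]
        norm_num
  have hexp := add_one_le_exp (s * log 2 * (1 + x) - 1)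
  have hsplit : exp (s * log 2 * (1 + x) - 1) * exp 1 = 2 ^ s * 2 ^ (x * s) := by
    rw [← exp_add, rpow_def_of_pos two_pos, rpow_def_of_pos two_pos, ← exp_add]
    ring_nf
  have hpos : (0 : ℝ) < 2 ^ (x * s) := by positivity
  rw [div_mul_eq_mul_div, le_div_iff₀ (by positivity)]
  rcases le_or_gt (1 + x) 0 with hx | hx
  · nlinarith [mul_nonneg hs.le (neg_nonneg.2 hx)]
  have hy : 0 < s * (1 + x) := mul_pos hs hx
  have hle : s * (1 + x) * log 2 * exp 1 ≤ 1.123 * 2 ^ (x * s) := by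
    calc s * (1 + x) * log 2 * exp 1 ≤ exp (s * log 2 * (1 + x) - 1) * exp 1 := by
          gcongr
          linarith
      _ = 2 ^ s * 2 ^ (x * s) := hsplit
      _ ≤ _ := by gcongr
  have hconst : (1.88 : ℝ) ≤ log 2 * exp 1 := by nlinarith
  nlinarith [mul_le_mul_of_nonneg_left hconst hy.le]

theorem piltz_prime_pow_le_mul_rpow {k : ℕ} (hk : 2 ≤ k) {ε : ℝ} (hε : 0 < ε)
    (hε' : ε ≤ ((k : ℝ) - 1) / 6) {p : ℕ} (hp : p.Prime) (a : ℕ) :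
    (piltz k (p ^ a) : ℝ) ≤
      (3 * ((k : ℝ) - 1) / (5 * ε)) ^ ((k : ℝ) - 1) * ((p ^ a : ℕ) : ℝ) ^ ε := by
  obtain ⟨m, rfl⟩ : ∃ m, k = m + 1 := ⟨k - 1, by omega⟩
  have hm : (0 : ℝ) < m := by exact_mod_cast (by omega : 0 < m)
  simp only [Nat.cast_add, Nat.cast_one, add_sub_cancel_right] at hε' ⊢
  have hs : ε / m ≤ 1 / 6 := by
    rw [div_le_iff₀ hm]
    linarith
  have hbase : 3 / (5 * (ε / m)) = 3 * (m : ℝ) / (5 * ε) := by field_simp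
  have hle := one_add_le_mul_two_rpow (div_pos hε hm) hs a
  rw [hbase] at hle
  calc (piltz (m + 1) (p ^ a) : ℝ) ≤ (1 + (a : ℝ)) ^ m := by
        rw [add_comm 1 (a : ℝ)]
        exact_mod_cast piltz_succ_prime_pow_le_succ_pow m hp a
    _ ≤ (3 * (m : ℝ) / (5 * ε) * 2 ^ (a * (ε / m))) ^ m := by gcongr
    _ = (3 * (m : ℝ) / (5 * ε)) ^ (m : ℝ) * ((2 : ℝ) ^ a) ^ ε := by
        rw [mul_pow, Real.rpow_natCast, ← Real.rpow_natCast (2 ^ _), ← Real.rpow_natCast 2 a,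
          ← Real.rpow_mul (by norm_num), ← Real.rpow_mul (by norm_num)]
        congr 2
        field_simp
    _ ≤ _ := by
        have : (2 : ℝ) ≤ p := by exact_mod_cast hp.two_le
        push_cast
        gcongr

theorem piltz_prime_pow_le_rpow {k : ℕ} {ε : ℝ} (hε : 0 < ε) {p : ℕ} (hp : p.Prime)
    (hkp : (k : ℝ) ^ (1 / ε) < p) (a : ℕ) :
    (piltz k (p ^ a) : ℝ) ≤ ((p ^ a : ℕ) : ℝ) ^ ε := by
  have hk : (k : ℝ) ≤ (p : ℝ) ^ ε := by
    calc (k : ℝ) = ((k : ℝ) ^ (1 / ε)) ^ ε := by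
          rw [← Real.rpow_mul k.cast_nonneg, one_div_mul_cancel hε.ne', Real.rpow_one]
      _ ≤ _ := by gcongr
  calc (piltz k (p ^ a) : ℝ) ≤ (k : ℝ) ^ a := by exact_mod_cast piltz_prime_pow_le_pow k hp a
    _ ≤ ((p : ℝ) ^ ε) ^ a := by gcongr
    _ = _ := by
      push_cast
      rw [Real.rpow_pow_comm p.cast_nonneg]

theorem piltz_le_rpow_mul_rpow {k : ℕ} (hk : 2 ≤ k) {n : ℕ} (hn : n ≠ 0) {ε : ℝ} (hε : 0 < ε)
    (hε' : ε ≤ ((k : ℝ) - 1) / 6) :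
    (piltz k n : ℝ) ≤
      (3 * ((k : ℝ) - 1) / (5 * ε)) ^ ((k : ℝ) ^ (1 / ε) * ((k : ℝ) - 1)) * (n : ℝ) ^ ε := by
  have hk1 : (0 : ℝ) < (k : ℝ) - 1 := by
    have : (2 : ℝ) ≤ k := by exact_mod_cast hk
    linarith
  set C : ℝ := 3 * ((k : ℝ) - 1) / (5 * ε) with hC
  have hC1 : 1 ≤ C := by
    rw [hC, le_div_iff₀ (by positivity)]
    linarith
  set K : ℝ := (k : ℝ) ^ (1 / ε) with hK
  have hK0 : 0 ≤ K := by positivity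
  set D : ℝ := C ^ ((k : ℝ) - 1) with hD
  have hD1 : 1 ≤ D := Real.one_le_rpow hC1 hk1.le
  have hcard : ((n.primeFactors.filter fun p : ℕ => (p : ℝ) ≤ K).card : ℝ) ≤ K := by
    have hsub : (n.primeFactors.filter fun p : ℕ => (p : ℝ) ≤ K) ⊆ Finset.Icc 1 ⌊K⌋₊ := by
      intro p hp
      rw [Finset.mem_filter] at hp
      exact Finset.mem_Icc.2
        ⟨(Nat.prime_of_mem_primeFactors hp.1).one_le, Nat.le_floor hp.2⟩
    have := Finset.card_le_card hsub
    rw [Nat.card_Icc, Nat.add_sub_cancel] at this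
    exact (Nat.cast_le.2 this).trans (Nat.floor_le hK0)
  have hprod : (n : ℝ) ^ ε = ∏ p ∈ n.primeFactors, ((p ^ n.factorization p : ℕ) : ℝ) ^ ε := by
    rw [Real.finsetProd_rpow _ _ fun _ _ => Nat.cast_nonneg _, ← Nat.cast_prod]
    congr 2
    exact (Nat.prod_factorization_pow_eq_self hn).symm
  calc (piltz k n : ℝ)
      = ∏ p ∈ n.primeFactors, (piltz k (p ^ n.factorization p) : ℝ) := by
        rw [piltz_eq_prod k hn, Nat.cast_prod]
    _ ≤ ∏ p ∈ n.primeFactors,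
          ((if (p : ℝ) ≤ K then D else 1) * ((p ^ n.factorization p : ℕ) : ℝ) ^ ε) := by
        refine Finset.prod_le_prod (fun _ _ => Nat.cast_nonneg _) fun p hp => ?_
        have hp' := Nat.prime_of_mem_primeFactors hp
        split_ifs with hpK
        · exact piltz_prime_pow_le_mul_rpow hk hε hε' hp' _
        · rw [one_mul]
          exact piltz_prime_pow_le_rpow hε hp' (not_le.1 hpK) _
    _ = D ^ (n.primeFactors.filter fun p : ℕ => (p : ℝ) ≤ K).card * (n : ℝ) ^ ε := by
        rw [Finset.prod_mul_distrib, ← hprod, ← Finset.prod_filter, Finset.prod_const]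
    _ ≤ D ^ K * (n : ℝ) ^ ε := by
        rw [← Real.rpow_natCast]
        gcongr
    _ = _ := by rw [hD, ← Real.rpow_mul (by linarith), mul_comm K]

theorem statement_7 (k : ℕ) (hk : 2 ≤ k) (n : ℕ) (hn : 0 < n) (ε : ℝ)
    (hε : 0 < ε) (hε' : ε ≤ ((k : ℝ) - 1) / 6) :
    (piltz k n : ℝ) ≤
      min ((k : ℝ) ^ n.primeFactorsList.length)
        ((3 * ((k : ℝ) - 1) / (5 * ε)) ^ ((k : ℝ) ^ (1 / ε) * ((k : ℝ) - 1)) * (n : ℝ) ^ ε) :=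
  le_min (by exact_mod_cast piltz_le_pow_length_primeFactorsList k hn.ne')
    (piltz_le_rpow_mul_rpow hk hn.ne' hε hε')
end

section
/- For all positive integers N, one has ∏_{n=1}^N n! ≤ N^{(N+1)²/2} · e^{−3(N²−1)/4}. -/
/-- The Stirling-type upper bound `n! ≤ e √n (n / e) ^ n`, in logarithmic form. -/
theorem log_factorial_le_stirling {n : ℕ} (hn : 1 ≤ n) :
    Real.log (n.factorial : ℝ) ≤ ((n : ℝ) + 1 / 2) * Real.log n - n + 1 := by
  induction n, hn using Nat.le_induction with
  | base => simp
  | succ n hn ih =>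
    have hpos : (0 : ℝ) < n := by exact_mod_cast hn
    have hlog := Real.le_log_one_add_of_nonneg (x := 1 / (n : ℝ)) (by positivity)
    have hquot : 1 + 1 / (n : ℝ) = (n + 1) / n := by field_simp
    have hfrac : 2 * (1 / (n : ℝ)) / (1 / n + 2) = 1 / (n + 1 / 2) := by field_simp; ring
    rw [hquot, hfrac, Real.log_div (by positivity) (by positivity),
      div_le_iff₀ (by positivity)] at hlog
    rw [Nat.factorial_succ]
    push_cast
    rw [Real.log_mul (by positivity) (by positivity)]
    linarith

/-- The second-order truncation of the series of `-log (1 - x)` is a lower bound. -/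
theorem add_sq_div_two_le_neg_log_one_sub {x : ℝ} (hx : 0 ≤ x) (hx1 : x < 1) :
    x + x ^ 2 / 2 ≤ -Real.log (1 - x) := by
  have hsum := Real.hasSum_pow_div_log_of_abs_lt_one (abs_lt.2 ⟨by linarith, hx1⟩)
  have hle := sum_le_hasSum (Finset.range 2) (fun i _ => by positivity) hsum
  norm_num [Finset.sum_range_succ] at hle
  linarith

theorem add_three_halves_le_sq_mul_log_sub_log {x : ℝ} (hx : 0 < x) :
    x + 3 / 2 ≤ (x + 1) ^ 2 * (Real.log (x + 1) - Real.log x) := by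
  have hlog := add_sq_div_two_le_neg_log_one_sub (x := 1 / (x + 1)) (by positivity)
    (by rw [div_lt_one (by positivity)]; linarith)
  have hquot : 1 - 1 / (x + 1) = x / (x + 1) := by field_simp; ring
  rw [hquot, Real.log_div (by positivity) (by positivity), neg_sub] at hlog
  calc x + 3 / 2 = (x + 1) ^ 2 * (1 / (x + 1) + (1 / (x + 1)) ^ 2 / 2) := by
        field_simp; ring
    _ ≤ _ := by gcongr

theorem log_prod_factorial_le {N : ℕ} (hN : 1 ≤ N) :
    Real.log (↑(∏ n ∈ Finset.Icc 1 N, n.factorial) : ℝ) ≤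
      Real.log N * (((N : ℝ) + 1) ^ 2 / 2) + -(3 * ((N : ℝ) ^ 2 - 1) / 4) := by
  induction N, hN using Nat.le_induction with
  | base => simp
  | succ N hN ih =>
    have hpos : (0 : ℝ) < N := by exact_mod_cast hN
    have hfact := log_factorial_le_stirling (Nat.le_add_left 1 N)
    have hstep := add_three_halves_le_sq_mul_log_sub_log hpos
    have hprod : (↑(∏ n ∈ Finset.Icc 1 N, n.factorial) : ℝ) ≠ 0 :=
      Nat.cast_ne_zero.2 (Finset.prod_ne_zero_iff.2 fun n _ => n.factorial_ne_zero)
    rw [Finset.prod_Icc_succ_top (by lia), Nat.cast_mul,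
      Real.log_mul hprod (by positivity)]
    push_cast at hfact ih ⊢
    linarith

theorem statement_8 (N : ℕ) (hN : 0 < N) :
    (↑(∏ n ∈ Finset.Icc 1 N, Nat.factorial n) : ℝ) ≤
      (N : ℝ) ^ (((N : ℝ) + 1) ^ 2 / 2) * Real.exp (-(3 * ((N : ℝ) ^ 2 - 1) / 4)) := by
  have hprod : (0 : ℝ) < ↑(∏ n ∈ Finset.Icc 1 N, n.factorial) :=
    Nat.cast_pos.2 (Finset.prod_pos fun n _ => n.factorial_pos)
  rw [Real.rpow_def_of_pos (by exact_mod_cast hN), ← Real.exp_add,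
    ← Real.log_le_iff_le_exp hprod]
  exact log_prod_factorial_le hN
end

section
/- Uniformly for all real α ≥ 3 and all real x > 1, one has ∑_{p ≤ x, p prime} 1/(log p)^α < (2α)^α · x/(log x)^{α+1}. -/
open Real

/-- An elementary Chebyshev-type bound valid for every `x > 1`. -/
lemma primeCounting_mul_log_lt {x : ℝ} (hx : 1 < x) :
    (Nat.primeCounting ⌊x⌋₊ : ℝ) * log x < 4 * x := by
  have hL : 0 < log x := log_pos hx
  have hx0 : 0 < x := by linarith
  have hs : 0 < √x := sqrt_pos.2 hx0
  have hpi := Chebyshev.pi_le_log4_mul_div hx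
  rw [log_sqrt hx0.le] at hpi
  have hlog4 : log 4 < 1.4 := by
    rw [show (4 : ℝ) = 2 ^ 2 by norm_num, log_pow]
    have := log_two_lt_d9
    push_cast
    linarith
  have hsqrt : √x * log x ≤ x := by
    have h := add_one_le_exp (log x / 2 - 1)
    have he : exp (log x / 2 - 1) ≤ √x / 2 := by
      rw [exp_sub, ← log_sqrt hx0.le, exp_log hs]
      exact div_le_div_of_nonneg_left hs.le two_pos (by linarith [exp_one_gt_d9])
    nlinarith [mul_self_sqrt hx0.le]
  calc (Nat.primeCounting ⌊x⌋₊ : ℝ) * log x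
      ≤ (log 4 * x / (log x / 2) + √x) * log x := by gcongr
    _ = 2 * log 4 * x + √x * log x := by field_simp
    _ < 4 * x := by nlinarith

/-- The power `t ^ s` is at most `(s / (e c)) ^ s * exp (c t)`, with equality at `t = s / c`. -/
lemma rpow_le_mul_exp {t s c : ℝ} (ht : 0 ≤ t) (hs : 0 < s) (hc : 0 < c) :
    t ^ s ≤ (s / (c * exp 1)) ^ s * exp (c * t) := by
  have h : t ≤ s / (c * exp 1) * exp (c * t / s) := by
    have h := add_one_le_exp (c * t / s - 1)
    rw [sub_add_cancel, exp_sub] at h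
    calc t = s / c * (c * t / s) := by field_simp
      _ ≤ s / c * (exp (c * t / s) / exp 1) := by gcongr
      _ = _ := by field_simp
  calc t ^ s ≤ (s / (c * exp 1) * exp (c * t / s)) ^ s := rpow_le_rpow ht h hs.le
    _ = _ := by
      rw [mul_rpow (by positivity) (exp_pos _).le, ← exp_mul, div_mul_cancel₀ _ hs.ne']

lemma add_one_rpow_le_exp_mul {a : ℝ} (ha : 0 < a) : (a + 1) ^ a ≤ exp 1 * a ^ a := by
  calc (a + 1) ^ a ≤ (exp (1 / a) * a) ^ a := by
        refine rpow_le_rpow (by positivity) ?_ ha.le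
        have h := mul_le_mul_of_nonneg_right (add_one_le_exp (1 / a)) ha.le
        rwa [add_mul, one_div_mul_cancel ha.ne', one_mul, add_comm] at h
    _ = _ := by
      rw [mul_rpow (exp_pos _).le ha.le, ← exp_mul, one_div_mul_cancel ha.ne']

lemma three_mul_add_one_le_rpow {a : ℝ} (ha : 3 ≤ a) : 3 * (a + 1) ≤ (5 / 2 : ℝ) ^ a := by
  have h := one_add_mul_self_le_rpow_one_add (s := 3 / 2) (by norm_num) (p := a / 3) (by linarith)
  have hb : 1 + a / 3 * (3 / 2) ≤ (5 / 2 : ℝ) ^ (a / 3) := by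
    convert h using 2
    norm_num
  have hpow : (5 / 2 : ℝ) ^ a = ((5 / 2 : ℝ) ^ (a / 3)) ^ 3 := by
    rw [← rpow_natCast, ← rpow_mul (by norm_num)]
    congr 1
    push_cast
    ring
  rw [hpow]
  refine le_trans ?_ (pow_le_pow_left₀ (by positivity) hb 3)
  nlinarith [mul_nonneg (sub_nonneg.2 ha) (sub_nonneg.2 ha), pow_nonneg (sub_nonneg.2 ha) 3]

/-- Comparison of the constants coming from the primes up to `x ^ (1 / 3)`. -/
lemma small_prime_constant_le {a : ℝ} (ha : 3 ≤ a) :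
    2 * (((a + 1) / (2 / 3 * exp 1)) ^ (a + 1) / log 2 ^ a) ≤ (2 * a) ^ a := by
  have ha0 : 0 < a := by linarith
  have hl : 0 < log 2 := log_pos one_lt_two
  have he := exp_pos 1
  have hel : 15 / 8 ≤ exp 1 * log 2 := by nlinarith [exp_one_gt_d9, log_two_gt_d9]
  have hq : 3 / 2 / (exp 1 * log 2) ≤ 4 / 5 := by
    rw [div_le_iff₀ (by positivity)]
    linarith
  have hsplit : 2 * (((a + 1) / (2 / 3 * exp 1)) ^ (a + 1) / log 2 ^ a) =
      (3 / 2 / (exp 1 * log 2)) ^ a * (a + 1) ^ a * (3 * (a + 1) / exp 1) := by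
    rw [rpow_add_one (by positivity), ← mul_rpow (by positivity) (by positivity),
      show 3 / 2 / (exp 1 * log 2) * (a + 1) = (a + 1) / (2 / 3 * exp 1) / log 2 by
        field_simp,
      div_rpow (by positivity) hl.le]
    field_simp
  calc _ = _ := hsplit
    _ ≤ (4 / 5) ^ a * (exp 1 * a ^ a) * ((5 / 2) ^ a / exp 1) := by
      gcongr
      · exact add_one_rpow_le_exp_mul ha0
      · exact three_mul_add_one_le_rpow ha
    _ = (4 / 5) ^ a * (5 / 2) ^ a * a ^ a := by field_simp
    _ = (2 * a) ^ a := by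
      rw [← mul_rpow (by norm_num) (by norm_num), ← mul_rpow (by norm_num) ha0.le]
      norm_num

lemma eight_mul_three_rpow_le {a : ℝ} (ha : 3 ≤ a) : 8 * (3 : ℝ) ^ a ≤ (2 * a) ^ a := by
  have h2 : (8 : ℝ) ≤ 2 ^ a := by
    calc (8 : ℝ) = 2 ^ (3 : ℝ) := by norm_num
      _ ≤ 2 ^ a := rpow_le_rpow_of_exponent_le one_le_two ha
  calc 8 * (3 : ℝ) ^ a ≤ 2 ^ a * a ^ a := by gcongr
    _ = (2 * a) ^ a := (mul_rpow two_pos.le (by linarith)).symm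

/-- Splitting the primes up to `x` at an arbitrary `y > 1`. -/
lemma sum_primes_one_div_log_rpow_le {a x y : ℝ} (ha : 0 ≤ a) (hy : 1 < y) :
    ∑ p ∈ (Finset.range (⌊x⌋₊ + 1)).filter Nat.Prime, 1 / log p ^ a ≤
      y * (1 / log 2 ^ a) + Nat.primeCounting ⌊x⌋₊ * (1 / log y ^ a) := by
  have hl : 0 < log 2 := log_pos one_lt_two
  have hly : 0 < log y := log_pos hy
  set s := (Finset.range (⌊x⌋₊ + 1)).filter Nat.Prime with hs
  have hterm : ∀ p ∈ s, 1 / log p ^ a ≤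
      (if (p : ℝ) ≤ y then 1 / log 2 ^ a else 0) + 1 / log y ^ a := by
    intro p hp
    have hp2 : (2 : ℝ) ≤ p := by exact_mod_cast (Finset.mem_filter.1 hp).2.two_le
    split_ifs with hpy
    · have : 1 / log p ^ a ≤ 1 / log 2 ^ a := by gcongr
      have : 0 ≤ 1 / log y ^ a := by positivity
      linarith
    · rw [zero_add]
      push Not at hpy
      gcongr
  have hcard : ((s.filter fun p : ℕ ↦ (p : ℝ) ≤ y).card : ℝ) ≤ y := by
    have hsub : (s.filter fun p : ℕ ↦ (p : ℝ) ≤ y) ⊆ Finset.Icc 1 ⌊y⌋₊ := by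
      intro p hp
      simp only [hs, Finset.mem_filter] at hp
      exact Finset.mem_Icc.2 ⟨hp.1.2.one_le, Nat.le_floor hp.2⟩
    have h := Finset.card_le_card hsub
    rw [Nat.card_Icc, Nat.add_sub_cancel] at h
    exact (Nat.cast_le.2 h).trans (Nat.floor_le (by linarith))
  have hpi : s.card = Nat.primeCounting ⌊x⌋₊ := by
    rw [Nat.primeCounting, Nat.primeCounting', Nat.count_eq_card_filter_range]
  calc _ ≤ ∑ p ∈ s, ((if (p : ℝ) ≤ y then 1 / log 2 ^ a else 0) + 1 / log y ^ a) :=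
        Finset.sum_le_sum hterm
    _ = (s.filter fun p : ℕ ↦ (p : ℝ) ≤ y).card * (1 / log 2 ^ a) +
        Nat.primeCounting ⌊x⌋₊ * (1 / log y ^ a) := by
      rw [Finset.sum_add_distrib, ← Finset.sum_filter, Finset.sum_const, Finset.sum_const,
        nsmul_eq_mul, nsmul_eq_mul, hpi]
    _ ≤ _ := by gcongr

theorem statement_9 (α x : ℝ) (hα : 3 ≤ α) (hx : 1 < x) :
    ∑ p ∈ (Finset.range (⌊x⌋₊ + 1)).filter Nat.Prime, 1 / Real.log p ^ α <
      (2 * α) ^ α * x / Real.log x ^ (α + 1) := by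
  have hα0 : 0 < α := by linarith
  have hL : 0 < log x := log_pos hx
  have hx0 : 0 < x := by linarith
  have hl : 0 < log 2 := log_pos one_lt_two
  have hy : 1 < exp (log x / 3) := one_lt_exp_iff.2 (by positivity)
  refine (sum_primes_one_div_log_rpow_le hα0.le hy).trans_lt ?_
  rw [lt_div_iff₀ (by positivity), add_mul, log_exp, div_rpow hL.le (by norm_num)]
  have hsmall : 2 * (exp (log x / 3) * (1 / log 2 ^ α) * log x ^ (α + 1)) ≤
      (2 * α) ^ α * x := by
    have h := rpow_le_mul_exp hL.le (by linarith : 0 < α + 1) (by norm_num : (0 : ℝ) < 2 / 3)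
    have hexp : exp (log x / 3) * exp (2 / 3 * log x) = x := by
      rw [← exp_add, show log x / 3 + 2 / 3 * log x = log x by ring, exp_log hx0]
    calc _ ≤ 2 * (exp (log x / 3) * (1 / log 2 ^ α) *
          (((α + 1) / (2 / 3 * exp 1)) ^ (α + 1) * exp (2 / 3 * log x))) := by gcongr
      _ = 2 * (((α + 1) / (2 / 3 * exp 1)) ^ (α + 1) / log 2 ^ α) *
          (exp (log x / 3) * exp (2 / 3 * log x)) := by ring
      _ ≤ (2 * α) ^ α * x := by
        rw [hexp]
        exact mul_le_mul_of_nonneg_right (small_prime_constant_le hα) hx0.le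
  have hlarge : 2 * (Nat.primeCounting ⌊x⌋₊ * (1 / (log x ^ α / 3 ^ α)) * log x ^ (α + 1)) <
      (2 * α) ^ α * x := by
    have hLα : 0 < log x ^ α := by positivity
    calc _ = 2 * 3 ^ α * (Nat.primeCounting ⌊x⌋₊ * log x) := by
          rw [rpow_add_one hL.ne']
          field_simp
      _ < 2 * 3 ^ α * (4 * x) :=
        mul_lt_mul_of_pos_left (primeCounting_mul_log_lt hx) (by positivity)
      _ = 8 * 3 ^ α * x := by ring
      _ ≤ (2 * α) ^ α * x := mul_le_mul_of_nonneg_right (eight_mul_three_rpow_le hα) hx0.le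
  linarith
end

section
/- Let x, y, z be real numbers with 2 ≤ y ≤ x and 2 ≤ z ≤ √y. Then the number of integers n with x − y < n ≤ x all of whose prime factors exceed z (i.e. P⁻(n) > z) is at most 2y/log z. -/
open Finset

/-- The squarefree integers in `[1, N]`. -/
def squarefreeUpTo (N : ℕ) : Finset ℕ := (Icc 1 N).filter Squarefree

/-- The sum of `1 / φ(k)` over squarefree `k ≤ N`. -/
noncomputable def selbergSum (N : ℕ) : ℝ := ∑ k ∈ squarefreeUpTo N, ((k.totient : ℝ))⁻¹

/-- The optimal Selberg sieve weights of level `N` for sifting an interval. -/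
noncomputable def selbergWeight (N d : ℕ) : ℝ :=
  ArithmeticFunction.moebius d * d *
    (∑ k ∈ squarefreeUpTo N with d ∣ k, ((k.totient : ℝ))⁻¹) / selbergSum N

lemma mem_squarefreeUpTo {N k : ℕ} :
    k ∈ squarefreeUpTo N ↔ 1 ≤ k ∧ k ≤ N ∧ Squarefree k := by
  simp [squarefreeUpTo, and_assoc]

lemma one_mem_squarefreeUpTo {N : ℕ} (hN : 1 ≤ N) : 1 ∈ squarefreeUpTo N :=
  mem_squarefreeUpTo.2 ⟨le_rfl, hN, squarefree_one⟩

lemma selbergSum_pos {N : ℕ} (hN : 1 ≤ N) : 0 < selbergSum N := by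
  refine sum_pos (fun k hk ↦ ?_) ⟨1, one_mem_squarefreeUpTo hN⟩
  have := Nat.totient_pos.2 (mem_squarefreeUpTo.1 hk).1
  positivity

lemma totient_div_mul {k l : ℕ} (hk : Squarefree k) (hl : l ∣ k) :
    (k / l).totient * l.totient = k.totient := by
  obtain ⟨m, rfl⟩ := hl
  have hl0 : 0 < l := Nat.pos_of_ne_zero (left_ne_zero_of_mul hk.ne_zero)
  rw [Nat.mul_div_cancel_left _ hl0, mul_comm l m,
    Nat.totient_mul (Nat.coprime_of_squarefree_mul hk).symm]

lemma sum_divisors_inv_totient_div {k d : ℕ} (hk : Squarefree k) (hd : d ∣ k) :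
    ∑ l ∈ d.divisors, (((k / l).totient : ℝ))⁻¹ = d * ((k.totient : ℝ))⁻¹ := by
  have h : (d : ℝ) = ∑ l ∈ d.divisors, (l.totient : ℝ) := by
    exact_mod_cast (Nat.sum_totient d).symm
  rw [h, sum_mul]
  refine sum_congr rfl fun l hl ↦ ?_
  have hlk := (Nat.dvd_of_mem_divisors hl).trans hd
  have hpos : 0 < k.totient := Nat.totient_pos.2 (Nat.pos_of_ne_zero hk.ne_zero)
  rw [← totient_div_mul hk hlk] at hpos ⊢
  have h1 := Nat.pos_of_mul_pos_left hpos
  have h2 := Nat.pos_of_mul_pos_right hpos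
  push_cast
  field_simp

lemma mul_sum_inv_totient_le {N d : ℕ} (hd : d ≠ 0) :
    d * (∑ k ∈ squarefreeUpTo N with d ∣ k, ((k.totient : ℝ))⁻¹) ≤ selbergSum N := by
  calc d * (∑ k ∈ squarefreeUpTo N with d ∣ k, ((k.totient : ℝ))⁻¹)
      = ∑ k ∈ squarefreeUpTo N with d ∣ k, ∑ l ∈ d.divisors, (((k / l).totient : ℝ))⁻¹ := by
        rw [mul_sum]
        refine sum_congr rfl fun k hk ↦ ?_
        rw [mem_filter, mem_squarefreeUpTo] at hk
        exact (sum_divisors_inv_totient_div hk.1.2.2 hk.2).symm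
    _ = ∑ q ∈ {k ∈ squarefreeUpTo N | d ∣ k} ×ˢ d.divisors,
          (((q.1 / q.2).totient : ℝ))⁻¹ := by rw [sum_product]
    _ = ∑ m ∈ ({k ∈ squarefreeUpTo N | d ∣ k} ×ˢ d.divisors).image (fun q ↦ q.1 / q.2),
          ((m.totient : ℝ))⁻¹ := by
        rw [sum_image]
        have hgcd : ∀ q ∈ {k ∈ squarefreeUpTo N | d ∣ k} ×ˢ d.divisors,
            Nat.gcd (q.1 / q.2) d * q.2 = d ∧ q.1 / q.2 * q.2 = q.1 := by
          rintro ⟨k, l⟩ hq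
          simp only [mem_product, mem_filter, mem_squarefreeUpTo, Nat.mem_divisors] at hq
          obtain ⟨⟨⟨-, -, hk⟩, m, rfl⟩, ⟨n, rfl⟩, -⟩ := hq
          have hl0 : 0 < l := Nat.pos_of_ne_zero (left_ne_zero_of_mul hd)
          have hcop : Nat.Coprime l m := by
            have := Nat.coprime_of_squarefree_mul hk
            exact this.coprime_dvd_left (dvd_mul_right l n)
          have hcop' : Nat.Coprime l n := Nat.coprime_of_squarefree_mul
            (hk.squarefree_of_dvd (dvd_mul_right _ _))
          have h1 : l * n * m / l = n * m := by
            rw [mul_assoc, Nat.mul_div_cancel_left _ hl0]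
          refine ⟨?_, ?_⟩
          · simp only [h1]
            rw [mul_comm l n, Nat.gcd_mul_left, hcop.symm.gcd_eq_one, mul_one]
          · simp only [h1]; ring
        intro q hq r hr h
        have h1 := hgcd q hq
        have h2 := hgcd r hr
        simp only at h
        rw [h] at h1
        have h3 : q.2 = r.2 := by
          have hpos : 0 < Nat.gcd (r.1 / r.2) d := Nat.gcd_pos_of_pos_right _ (by omega)
          exact Nat.eq_of_mul_eq_mul_left hpos (h1.1.trans h2.1.symm)
        refine Prod.ext ?_ h3
        exact h1.2.symm.trans ((congrArg _ h3).trans h2.2)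
    _ ≤ selbergSum N := by
        refine sum_le_sum_of_subset_of_nonneg ?_ fun _ _ _ ↦ by positivity
        intro m hm
        simp only [mem_image, mem_product, mem_filter, mem_squarefreeUpTo, Nat.mem_divisors,
          Prod.exists] at hm
        obtain ⟨k, l, ⟨⟨⟨hk1, hkN, hk⟩, hdk⟩, hld, -⟩, rfl⟩ := hm
        have hlk := hld.trans hdk
        refine mem_squarefreeUpTo.2 ⟨Nat.div_pos (Nat.le_of_dvd hk1 hlk)
          (Nat.pos_of_dvd_of_pos hlk hk1), (Nat.div_le_self _ _).trans hkN,
          hk.squarefree_of_dvd (Nat.div_dvd_of_dvd hlk)⟩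

lemma abs_selbergWeight_le_one {N d : ℕ} (hN : 1 ≤ N) (hd : d ≠ 0) :
    |selbergWeight N d| ≤ 1 := by
  have hL := selbergSum_pos hN
  have h0 : 0 ≤ ∑ k ∈ squarefreeUpTo N with d ∣ k, ((k.totient : ℝ))⁻¹ :=
    sum_nonneg fun _ _ ↦ by positivity
  have hmu : |(ArithmeticFunction.moebius d : ℝ)| ≤ 1 := by
    exact_mod_cast ArithmeticFunction.abs_moebius_le_one
  rw [selbergWeight, abs_div, abs_of_pos hL, div_le_one hL, mul_assoc, abs_mul,
    abs_of_nonneg (mul_nonneg d.cast_nonneg h0)]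
  exact (mul_le_of_le_one_left (mul_nonneg d.cast_nonneg h0) hmu).trans
    (mul_sum_inv_totient_le hd)

lemma selbergWeight_one {N : ℕ} (hN : 1 ≤ N) : selbergWeight N 1 = 1 := by
  have := (selbergSum_pos hN).ne'
  simp only [selbergWeight, one_dvd, filter_true, ArithmeticFunction.moebius_apply_one]
  rw [← selbergSum]
  simp [this]

lemma sum_moebius_divisors_filter_dvd {k m : ℕ} (hm : Squarefree m) (hk : k ∣ m) :
    ∑ d ∈ m.divisors with k ∣ d, ArithmeticFunction.moebius d =
      if m = k then ArithmeticFunction.moebius k else 0 := by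
  obtain ⟨e, rfl⟩ := hk
  have hk0 : k ≠ 0 := left_ne_zero_of_mul hm.ne_zero
  have he0 : e ≠ 0 := right_ne_zero_of_mul hm.ne_zero
  have himg : {d ∈ (k * e).divisors | k ∣ d} = e.divisors.image (k * ·) := by
    ext d
    simp only [mem_filter, Nat.mem_divisors, mem_image]
    constructor
    · rintro ⟨⟨h, -⟩, c, rfl⟩
      exact ⟨c, ⟨Nat.dvd_of_mul_dvd_mul_left (Nat.pos_of_ne_zero hk0) h, he0⟩, rfl⟩
    · rintro ⟨c, ⟨h, -⟩, rfl⟩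
      exact ⟨⟨Nat.mul_dvd_mul_left k h, hm.ne_zero⟩, dvd_mul_right _ _⟩
  rw [himg, sum_image fun a _ b _ h ↦ Nat.eq_of_mul_eq_mul_left (Nat.pos_of_ne_zero hk0) h]
  have hcop := Nat.coprime_of_squarefree_mul hm
  calc ∑ c ∈ e.divisors, ArithmeticFunction.moebius (k * c)
      = ArithmeticFunction.moebius k * ∑ c ∈ e.divisors, ArithmeticFunction.moebius c := by
        rw [mul_sum]
        refine sum_congr rfl fun c hc ↦ ?_
        exact ArithmeticFunction.isMultiplicative_moebius.map_mul_of_coprime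
          (hcop.coprime_dvd_right (Nat.dvd_of_mem_divisors hc))
    _ = _ := by
        rw [← ArithmeticFunction.coe_mul_zeta_apply, ArithmeticFunction.moebius_mul_coe_zeta,
          ArithmeticFunction.one_apply]
        have : k * e = k ↔ e = 1 := by simp [hk0]
        simp [this]

lemma sum_selbergWeight_div {N k : ℕ} (hk : k ∈ squarefreeUpTo N) :
    ∑ d ∈ squarefreeUpTo N with k ∣ d, selbergWeight N d / d =
      ArithmeticFunction.moebius k * ((k.totient : ℝ))⁻¹ / selbergSum N := by
  calc ∑ d ∈ squarefreeUpTo N with k ∣ d, selbergWeight N d / d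
      = (∑ d ∈ squarefreeUpTo N with k ∣ d, ∑ m ∈ squarefreeUpTo N with d ∣ m,
          (ArithmeticFunction.moebius d : ℝ) * ((m.totient : ℝ))⁻¹) / selbergSum N := by
        rw [sum_div]
        refine sum_congr rfl fun d hd ↦ ?_
        have hd0 : (d : ℝ) ≠ 0 := by
          have := (mem_squarefreeUpTo.1 (mem_filter.1 hd).1).1
          positivity
        rw [selbergWeight, ← mul_sum]
        field_simp
    _ = (∑ m ∈ squarefreeUpTo N with k ∣ m, ∑ d ∈ m.divisors with k ∣ d,
          (ArithmeticFunction.moebius d : ℝ) * ((m.totient : ℝ))⁻¹) / selbergSum N := by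
        congr 1
        refine sum_comm' fun d m ↦ ?_
        simp only [mem_filter, mem_squarefreeUpTo, Nat.mem_divisors]
        constructor
        · rintro ⟨⟨⟨h1, h2, h3⟩, h4⟩, ⟨h5, h6, h7⟩, h8⟩
          exact ⟨⟨⟨h8, by omega⟩, h4⟩, ⟨h5, h6, h7⟩, h4.trans h8⟩
        · rintro ⟨⟨⟨h1, h2⟩, h3⟩, ⟨h4, h5, h6⟩, h7⟩
          exact ⟨⟨⟨Nat.pos_of_dvd_of_pos h1 h4, (Nat.le_of_dvd h4 h1).trans h5,
            h6.squarefree_of_dvd h1⟩, h3⟩, ⟨h4, h5, h6⟩, h1⟩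
    _ = _ := by
        congr 1
        rw [sum_eq_single_of_mem k (by simp [hk])]
        · have := sum_moebius_divisors_filter_dvd (mem_squarefreeUpTo.1 hk).2.2 dvd_rfl
          rw [if_pos rfl] at this
          rw [← sum_mul]
          exact_mod_cast congrArg (fun t : ℤ ↦ (t : ℝ) * ((k.totient : ℝ))⁻¹) this
        · intro m hm hmk
          rw [mem_filter, mem_squarefreeUpTo] at hm
          have := sum_moebius_divisors_filter_dvd hm.1.2.2 hm.2
          rw [if_neg hmk] at this
          rw [← sum_mul, ← Int.cast_sum, this, Int.cast_zero, zero_mul]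

lemma inv_lcm_eq_sum_totient {d e : ℕ} (hd : d ≠ 0) (he : e ≠ 0) :
    ((Nat.lcm d e : ℕ) : ℝ)⁻¹ =
      (∑ k ∈ (Nat.gcd d e).divisors, (k.totient : ℝ)) / (d * e) := by
  have h : ((∑ k ∈ (Nat.gcd d e).divisors, k.totient : ℕ) : ℝ) = Nat.gcd d e := by
    rw [Nat.sum_totient]
  push_cast at h
  have hl : (Nat.lcm d e : ℝ) ≠ 0 := by exact_mod_cast Nat.lcm_ne_zero hd he
  have hgl : (Nat.gcd d e : ℝ) * Nat.lcm d e = d * e := by exact_mod_cast Nat.gcd_mul_lcm d e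
  rw [h, ← hgl]
  have : (Nat.gcd d e : ℝ) ≠ 0 := by exact_mod_cast Nat.gcd_ne_zero_left hd
  field_simp

lemma sum_selbergWeight_mul_inv_lcm {N : ℕ} (hN : 1 ≤ N) :
    ∑ d ∈ squarefreeUpTo N, ∑ e ∈ squarefreeUpTo N,
      selbergWeight N d * selbergWeight N e * ((Nat.lcm d e : ℕ) : ℝ)⁻¹ =
        (selbergSum N)⁻¹ := by
  calc _ = ∑ d ∈ squarefreeUpTo N, ∑ e ∈ squarefreeUpTo N, ∑ k ∈ squarefreeUpTo N,
          (k.totient : ℝ) * ((if k ∣ d then selbergWeight N d / d else 0) *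
            (if k ∣ e then selbergWeight N e / e else 0)) := by
        refine sum_congr rfl fun d hd ↦ sum_congr rfl fun e he ↦ ?_
        rw [mem_squarefreeUpTo] at hd he
        have hsub : (Nat.gcd d e).divisors = {k ∈ squarefreeUpTo N | k ∣ d ∧ k ∣ e} := by
          ext k
          simp only [Nat.mem_divisors, mem_filter, mem_squarefreeUpTo, Nat.dvd_gcd_iff]
          constructor
          · rintro ⟨⟨h1, h2⟩, -⟩
            exact ⟨⟨Nat.pos_of_dvd_of_pos h1 hd.1, (Nat.le_of_dvd hd.1 h1).trans hd.2.1,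
              hd.2.2.squarefree_of_dvd h1⟩, h1, h2⟩
          · rintro ⟨-, h⟩
            exact ⟨h, Nat.gcd_ne_zero_left (by omega)⟩
        rw [inv_lcm_eq_sum_totient (by omega) (by omega), hsub, sum_filter, sum_div, mul_sum]
        refine sum_congr rfl fun k _ ↦ ?_
        by_cases h1 : k ∣ d <;> by_cases h2 : k ∣ e <;> simp [h1, h2]
        ring
    _ = ∑ k ∈ squarefreeUpTo N, (k.totient : ℝ) *
          (∑ d ∈ squarefreeUpTo N with k ∣ d, selbergWeight N d / d) ^ 2 := by
        rw [sum_congr rfl fun d _ ↦ sum_comm, sum_comm]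
        refine sum_congr rfl fun k _ ↦ ?_
        rw [sum_filter, sq, sum_mul_sum, mul_sum]
        exact sum_congr rfl fun d _ ↦ by rw [mul_sum]
    _ = ∑ k ∈ squarefreeUpTo N, ((k.totient : ℝ))⁻¹ * ((selbergSum N)⁻¹) ^ 2 := by
        refine sum_congr rfl fun k hk ↦ ?_
        rw [sum_selbergWeight_div hk]
        have hsq : ((ArithmeticFunction.moebius k : ℤ) : ℝ) ^ 2 = 1 := by
          exact_mod_cast ArithmeticFunction.moebius_sq_eq_one_of_squarefree
            (mem_squarefreeUpTo.1 hk).2.2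
        have : (k.totient : ℝ) ≠ 0 := by
          exact_mod_cast (Nat.totient_pos.2 (mem_squarefreeUpTo.1 hk).1).ne'
        rw [div_pow, mul_pow, hsq]
        field_simp
    _ = (selbergSum N)⁻¹ := by
        have := (selbergSum_pos hN).ne'
        rw [← sum_mul, ← selbergSum]
        field_simp

open UniqueFactorizationMonoid in
lemma sum_inv_radical_eq_le (N k : ℕ) :
    ∑ n ∈ Icc 1 N with radical n = k, ((n : ℝ))⁻¹ ≤ ((k.totient : ℝ))⁻¹ := by
  let f : ℕ →* ℝ :=
    { toFun := fun n ↦ ((n : ℝ))⁻¹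
      map_one' := by simp
      map_mul' := fun m n ↦ by push_cast; rw [mul_inv] }
  have hf : ∀ {p : ℕ}, p.Prime → ‖f p‖ < 1 := by
    intro p hp
    have h1 : (1 : ℝ) < p := by exact_mod_cast hp.one_lt
    change ‖((p : ℝ))⁻¹‖ < 1
    rw [norm_inv, Real.norm_natCast]
    exact inv_lt_one_of_one_lt₀ h1
  have hsum := (EulerProduct.summable_and_hasSum_factoredNumbers_prod_filter_prime_geometric
    hf k.primeFactors).2
  rw [filter_true_of_mem fun p hp ↦ Nat.prime_of_mem_primeFactors hp] at hsum
  have htot : ((k.totient : ℝ))⁻¹ =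
      ((k : ℝ))⁻¹ * ∏ p ∈ k.primeFactors, (1 - f p)⁻¹ := by
    have h : ((k.totient : ℚ) : ℝ) =
        ((k * ∏ p ∈ k.primeFactors, (1 - ((p : ℚ))⁻¹) : ℚ) : ℝ) := by
      rw [Nat.totient_eq_mul_prod_factors]
    push_cast at h
    rw [h, mul_inv, ← prod_inv_distrib]
    rfl
  have hrad : ∀ n ∈ {n ∈ Icc 1 N | radical n = k}, k * (n / k) = n := by
    intro n hn
    rw [mem_filter] at hn
    exact Nat.mul_div_cancel' (hn.2 ▸ radical_dvd_self)
  have hmem : ∀ n ∈ {n ∈ Icc 1 N | radical n = k},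
      n / k ∈ Nat.factoredNumbers k.primeFactors := by
    intro n hn
    have hn' := hrad n hn
    rw [mem_filter, mem_Icc] at hn
    rw [Nat.mem_factoredNumbers_iff_primeFactors_subset, ← hn.2, Nat.primeFactors_radical]
    have hdvd : n / k ∣ n := ⟨k, by rw [mul_comm, hn']⟩
    rw [hn.2]
    exact ⟨ne_zero_of_dvd_ne_zero (by omega) hdvd, Nat.primeFactors_mono hdvd (by omega)⟩
  have hsum' := hasSum_subtype_iff_indicator.1 hsum
  rw [htot]
  calc ∑ n ∈ Icc 1 N with radical n = k, ((n : ℝ))⁻¹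
      = ((k : ℝ))⁻¹ * ∑ n ∈ Icc 1 N with radical n = k,
          (Nat.factoredNumbers k.primeFactors).indicator f (n / k) := by
        rw [mul_sum]
        refine sum_congr rfl fun n hn ↦ ?_
        rw [Set.indicator_of_mem (hmem n hn)]
        change _ = ((k : ℝ))⁻¹ * (((n / k : ℕ) : ℝ))⁻¹
        rw [← mul_inv, ← Nat.cast_mul, hrad n hn]
    _ = ((k : ℝ))⁻¹ * ∑ m ∈ {n ∈ Icc 1 N | radical n = k}.image (· / k),
          (Nat.factoredNumbers k.primeFactors).indicator f m := by
        rw [sum_image]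
        intro a ha b hb hab
        rw [← hrad a ha, ← hrad b hb]
        exact congrArg (k * ·) hab
    _ ≤ _ := by
        refine mul_le_mul_of_nonneg_left (sum_le_hasSum _ (fun m _ ↦ ?_) hsum') (by positivity)
        refine Set.indicator_nonneg (fun m _ ↦ ?_) m
        change 0 ≤ ((m : ℝ))⁻¹
        positivity

open UniqueFactorizationMonoid in
lemma log_add_one_le_selbergSum (N : ℕ) : Real.log (N + 1) ≤ selbergSum N := by
  have h := log_add_one_le_harmonic N
  rw [harmonic_eq_sum_Icc] at h
  push_cast at h
  refine h.trans ?_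
  have hmaps : ∀ n ∈ Icc 1 N, radical n ∈ squarefreeUpTo N := by
    intro n hn
    rw [mem_Icc] at hn
    exact mem_squarefreeUpTo.2 ⟨Nat.radical_pos n,
      (Nat.radical_le_self_iff.2 (by omega)).trans hn.2, squarefree_radical⟩
  rw [← sum_fiberwise_of_maps_to hmaps]
  exact sum_le_sum fun k _ ↦ sum_inv_radical_eq_le N k

lemma abs_card_multiples_Ioc_sub_le {x y : ℝ} (hy : 0 ≤ y) (hyx : y ≤ x) (d : ℕ) :
    |(#{n ∈ Ioc ⌊x - y⌋₊ ⌊x⌋₊ | d ∣ n} : ℝ) - y * ((d : ℝ))⁻¹| ≤ 1 := by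
  have hab : ⌊x - y⌋₊ ≤ ⌊x⌋₊ := Nat.floor_mono (by linarith)
  have hcard : #{n ∈ Ioc ⌊x - y⌋₊ ⌊x⌋₊ | d ∣ n} + ⌊x - y⌋₊ / d = ⌊x⌋₊ / d := by
    rw [← Nat.Ioc_filter_dvd_card_eq_div, ← Nat.Ioc_filter_dvd_card_eq_div,
      ← Ioc_union_Ioc_eq_Ioc (Nat.zero_le _) hab, filter_union, card_union_of_disjoint, add_comm]
    exact disjoint_filter_filter (Ioc_disjoint_Ioc_of_le le_rfl)
  rw [← Nat.floor_div_natCast, ← Nat.floor_div_natCast] at hcard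
  have hcard' : (#{n ∈ Ioc ⌊x - y⌋₊ ⌊x⌋₊ | d ∣ n} : ℝ) + ⌊(x - y) / d⌋₊ = ⌊x / d⌋₊ := by
    exact_mod_cast hcard
  have h1 := Nat.floor_le (a := x / d) (div_nonneg (hy.trans hyx) d.cast_nonneg)
  have h2 := Nat.lt_floor_add_one (x / d)
  have h3 := Nat.floor_le (a := (x - y) / d) (div_nonneg (by linarith) d.cast_nonneg)
  have h4 := Nat.lt_floor_add_one ((x - y) / d)
  have h5 : (x - y) / d = x / d - y * ((d : ℝ))⁻¹ := by rw [sub_div, div_eq_mul_inv y]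
  rw [abs_le]
  constructor <;> linarith

/-- Selberg's upper bound sieve for an interval of length `y`, at level `N`. -/
lemma card_le_of_forall_not_dvd {x y : ℝ} (hy : 0 ≤ y) (hyx : y ≤ x) {N : ℕ} (hN : 1 ≤ N)
    {A : Finset ℕ} (hA : A ⊆ Ioc ⌊x - y⌋₊ ⌊x⌋₊)
    (hsift : ∀ n ∈ A, ∀ d ∈ squarefreeUpTo N, d ∣ n → d = 1) :
    (#A : ℝ) ≤ y / selbergSum N + (N : ℝ) ^ 2 := by
  set I := Ioc ⌊x - y⌋₊ ⌊x⌋₊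
  have hcard : #(squarefreeUpTo N) ≤ N := by
    simpa [squarefreeUpTo] using card_filter_le (Icc 1 N) Squarefree
  calc (#A : ℝ) = ∑ n ∈ A, (∑ d ∈ squarefreeUpTo N with d ∣ n, selbergWeight N d) ^ 2 := by
        rw [card_eq_sum_ones, Nat.cast_sum]
        refine sum_congr rfl fun n hn ↦ ?_
        have : {d ∈ squarefreeUpTo N | d ∣ n} = {1} := by
          ext d
          rw [mem_filter, mem_singleton]
          refine ⟨fun h ↦ hsift n hn d h.1 h.2, ?_⟩
          rintro rfl
          exact ⟨one_mem_squarefreeUpTo hN, one_dvd n⟩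
        simp [this, selbergWeight_one hN]
    _ ≤ ∑ n ∈ I, (∑ d ∈ squarefreeUpTo N with d ∣ n, selbergWeight N d) ^ 2 :=
        sum_le_sum_of_subset_of_nonneg hA fun _ _ _ ↦ sq_nonneg _
    _ = ∑ d ∈ squarefreeUpTo N, ∑ e ∈ squarefreeUpTo N,
          selbergWeight N d * selbergWeight N e * #{n ∈ I | Nat.lcm d e ∣ n} := by
        simp_rw [sq, sum_filter, sum_mul_sum]
        rw [sum_comm]
        refine sum_congr rfl fun d _ ↦ ?_
        rw [sum_comm]
        refine sum_congr rfl fun e _ ↦ ?_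
        rw [card_filter, Nat.cast_sum, mul_sum]
        refine sum_congr rfl fun n _ ↦ ?_
        by_cases h1 : d ∣ n <;> by_cases h2 : e ∣ n <;> simp [Nat.lcm_dvd_iff, h1, h2]
    _ ≤ ∑ d ∈ squarefreeUpTo N, ∑ e ∈ squarefreeUpTo N,
          (y * (selbergWeight N d * selbergWeight N e * ((Nat.lcm d e : ℕ) : ℝ)⁻¹) + 1) := by
        refine sum_le_sum fun d hd ↦ sum_le_sum fun e he ↦ ?_
        have hd1 := abs_selbergWeight_le_one hN
          (Nat.one_le_iff_ne_zero.1 (mem_squarefreeUpTo.1 hd).1)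
        have he1 := abs_selbergWeight_le_one hN
          (Nat.one_le_iff_ne_zero.1 (mem_squarefreeUpTo.1 he).1)
        have hr := abs_card_multiples_Ioc_sub_le hy hyx (Nat.lcm d e)
        have hprod : |selbergWeight N d * selbergWeight N e *
            ((#{n ∈ I | Nat.lcm d e ∣ n} : ℝ) - y * ((Nat.lcm d e : ℕ) : ℝ)⁻¹)| ≤ 1 := by
          rw [abs_mul, abs_mul]
          exact mul_le_one₀ (mul_le_one₀ hd1 (abs_nonneg _) he1) (abs_nonneg _) hr
        have := (abs_le.1 hprod).2
        linarith
    _ = y / selbergSum N + (#(squarefreeUpTo N) : ℝ) ^ 2 := by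
        simp_rw [sum_add_distrib, ← mul_sum]
        rw [sum_selbergWeight_mul_inv_lcm hN]
        simp [sq, div_eq_mul_inv]
    _ ≤ y / selbergSum N + (N : ℝ) ^ 2 := by gcongr

lemma card_odd_Ioc_le {x y : ℝ} (hy : 0 ≤ y) (hyx : y ≤ x) {A : Finset ℕ}
    (hA : A ⊆ Ioc ⌊x - y⌋₊ ⌊x⌋₊) (hodd : ∀ n ∈ A, ¬ 2 ∣ n) : (#A : ℝ) ≤ y / 2 + 1 := by
  have hmem : A.image (· + 1) ⊆ {n ∈ Ioc ⌊x + 1 - y⌋₊ ⌊x + 1⌋₊ | 2 ∣ n} := by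
    intro m hm
    obtain ⟨n, hn, rfl⟩ := mem_image.1 hm
    have h1 := mem_Ioc.1 (hA hn)
    have h2 := hodd n hn
    rw [mem_filter, mem_Ioc, show x + 1 - y = x - y + 1 by ring,
      Nat.floor_add_one (by linarith), Nat.floor_add_one (by linarith)]
    omega
  have h := card_le_card hmem
  rw [card_image_of_injective _ (add_left_injective 1)] at h
  have h' := (abs_le.1 (abs_card_multiples_Ioc_sub_le hy (by linarith : y ≤ x + 1) 2)).2
  have h'' : (#A : ℝ) ≤ #{n ∈ Ioc ⌊x + 1 - y⌋₊ ⌊x + 1⌋₊ | 2 ∣ n} := by exact_mod_cast h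
  push_cast at h'
  linarith

lemma inv_sub_log_add_inv_sq_le {u : ℝ} (hu : 3.6 ≤ u) :
    1 / (u - Real.log u) + 1 / u ^ 2 ≤ 2 / u ∧ 0 < u - Real.log u := by
  have hlog4 : Real.log 4 = 2 * Real.log 2 := by
    rw [show (4 : ℝ) = 2 ^ 2 by norm_num, Real.log_pow]
    norm_num
  have h2 := Real.log_two_lt_d9
  have htan : Real.log u ≤ Real.log 4 + (u / 4 - 1) := by
    have := Real.log_le_sub_one_of_pos (show 0 < u / 4 by linarith)
    rw [Real.log_div (by linarith) (by norm_num)] at this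
    linarith
  have hlog0 : 0 ≤ Real.log u := Real.log_nonneg (by linarith)
  have hkey : 2 * Real.log u + 1 ≤ u := by linarith
  have hpos : 0 < u - Real.log u := by linarith
  refine ⟨?_, hpos⟩
  have hu0 : 0 < u := by linarith
  rw [div_add_div _ _ hpos.ne' (by positivity), div_le_div_iff₀ (by positivity) hu0]
  nlinarith [mul_nonneg hu0.le (sub_nonneg.2 hkey), mul_pos hu0 hu0,
    mul_nonneg (sq_nonneg u) (sub_nonneg.2 hkey), mul_nonneg hu0.le hlog0]

open scoped Classical in
/-- Large sieve bound: the number of integers in `(x - y, x]` all of whose prime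
factors exceed `z` (with `n = 1` counted, since `P⁻(1) = +∞`) is at most `2y / log z`. -/
theorem statement_12 (x y z : ℝ) (hy : 2 ≤ y) (hyx : y ≤ x) (hz : 2 ≤ z)
    (hzy : z ≤ Real.sqrt y) :
    (((Finset.Icc 1 ⌊x⌋₊).filter
        (fun n : ℕ => x - y < (n : ℝ) ∧ ∀ p : ℕ, p.Prime → p ∣ n → z < (p : ℝ))).card : ℝ) ≤
      2 * y / Real.log z := by
  set A := (Finset.Icc 1 ⌊x⌋₊).filter
    (fun n : ℕ => x - y < (n : ℝ) ∧ ∀ p : ℕ, p.Prime → p ∣ n → z < (p : ℝ)) with hAdef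
  have hy0 : 0 ≤ y := by linarith
  have hA : A ⊆ Ioc ⌊x - y⌋₊ ⌊x⌋₊ := by
    intro n hn
    simp only [hAdef, mem_filter, mem_Icc] at hn
    exact mem_Ioc.2 ⟨(Nat.floor_lt (by linarith)).2 hn.2.1, hn.1.2⟩
  have hprime : ∀ n ∈ A, ∀ p : ℕ, p.Prime → p ∣ n → z < (p : ℝ) := fun n hn ↦
    (mem_filter.1 hn).2.2
  have hz2y : z ^ 2 ≤ y := (Real.le_sqrt (by linarith) hy0).1 hzy
  have hlogpos : 0 < Real.log z := Real.log_pos (by linarith)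
  set u := Real.log z with hu
  rcases le_or_gt u 3.6 with hsmall | hlarge
  · have hodd := card_odd_Ioc_le hy0 hyx hA fun n hn h2 ↦ by
      have := hprime n hn 2 Nat.prime_two h2
      push_cast at this
      linarith
    refine hodd.trans ?_
    rw [le_div_iff₀ hlogpos]
    rcases le_or_gt u 2 with h2 | h2
    · nlinarith
    · have hz7 : 6.25 ≤ z := by
        have h1 : Real.exp 2 ≤ z := (Real.le_log_iff_exp_le (by linarith)).1 h2.le
        have h3 : Real.exp 2 = Real.exp 1 * Real.exp 1 := by rw [← Real.exp_add]; norm_num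
        have h4 := Real.exp_one_gt_d9
        nlinarith
      have hy39 : 39 ≤ y := by nlinarith
      nlinarith
  · obtain ⟨hbound, hupos⟩ := inv_sub_log_add_inv_sq_le hlarge.le
    have hu0 : 0 < u := hlogpos
    have hz0 : 0 < z := by linarith
    set N := ⌊z / u⌋₊ with hNdef
    have hlogzu : Real.log (z / u) = u - Real.log u := by
      rw [Real.log_div hz0.ne' hu0.ne']
    have hN : 1 ≤ N := by
      refine Nat.le_floor ?_
      rw [Nat.cast_one, ← Real.log_nonneg_iff (by positivity), hlogzu]
      exact hupos.le
    have hNle : (N : ℝ) ≤ z / u := Nat.floor_le (by positivity)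
    have hL : u - Real.log u ≤ selbergSum N := by
      rw [← hlogzu]
      exact (Real.log_le_log (by positivity) (Nat.lt_floor_add_one _).le).trans
        (log_add_one_le_selbergSum N)
    have hsift : ∀ n ∈ A, ∀ d ∈ squarefreeUpTo N, d ∣ n → d = 1 := by
      intro n hn d hd hdn
      by_contra hd1
      have h1 := hprime n hn d.minFac (Nat.minFac_prime hd1) ((Nat.minFac_dvd d).trans hdn)
      have h2 : (d.minFac : ℝ) ≤ N := by
        have := Nat.minFac_le (mem_squarefreeUpTo.1 hd).1
        exact_mod_cast this.trans (mem_squarefreeUpTo.1 hd).2.1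
      have h3 : z / u ≤ z := div_le_self hz0.le (by linarith)
      linarith
    calc (#A : ℝ) ≤ y / selbergSum N + (N : ℝ) ^ 2 :=
          card_le_of_forall_not_dvd hy0 hyx hN hA hsift
      _ ≤ y / (u - Real.log u) + (z / u) ^ 2 := by gcongr
      _ ≤ y / (u - Real.log u) + y / u ^ 2 := by rw [div_pow]; gcongr
      _ = y * (1 / (u - Real.log u) + 1 / u ^ 2) := by ring
      _ ≤ y * (2 / u) := by gcongr
      _ = 2 * y / u := by ring
end

section
/- Let ℓ ≥ 1 be a real number. Assume x ≥ exp(7^{28} (12eℓ)^{28 log(192eℓ)}) and z ≥ x^{1/(3ℓ)}. Then the number of positive integers n ≤ z with P⁺(n) < log x · log log x is strictly less than z^{1/4}. -/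
/-- The largest prime factor of `n`, with the convention `P⁺(1) = 1`. -/
def maxPrimeFactor (n : ℕ) : ℕ := max 1 (n.primeFactors.sup id)

open Real in
/-- Comparison of a partial sum of `m ^ (-σ)` with the corresponding integral. -/
lemma sum_rpow_neg_le {σ : ℝ} (hσ₀ : 0 ≤ σ) (hσ₁ : σ < 1) (N : ℕ) :
    ∑ m ∈ Finset.range N, ((m + 1 : ℕ) : ℝ) ^ (-σ) ≤ (N : ℝ) ^ (1 - σ) / (1 - σ) := by
  have hτ : 0 < 1 - σ := by linarith
  induction N with
  | zero => simp [Real.zero_rpow hτ.ne']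
  | succ N ih =>
    rw [Finset.sum_range_succ]
    have hpos : (0 : ℝ) < ((N + 1 : ℕ) : ℝ) := by positivity
    have hbern := rpow_one_add_le_one_add_mul_self (s := -1 / ((N + 1 : ℕ) : ℝ))
      (by rw [le_div_iff₀ hpos]; push_cast; linarith [(Nat.cast_nonneg N : (0 : ℝ) ≤ N)])
      hτ.le (by linarith)
    have hN : (N : ℝ) = ((N + 1 : ℕ) : ℝ) * (1 + -1 / ((N + 1 : ℕ) : ℝ)) := by
      field_simp; push_cast; ring
    have hfac : (0 : ℝ) ≤ 1 + -1 / ((N + 1 : ℕ) : ℝ) := by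
      have : 1 + -1 / ((N + 1 : ℕ) : ℝ) = N / ((N + 1 : ℕ) : ℝ) := by
        field_simp; push_cast; ring
      rw [this]; positivity
    have hstep : (N : ℝ) ^ (1 - σ) ≤
        ((N + 1 : ℕ) : ℝ) ^ (1 - σ) - (1 - σ) * ((N + 1 : ℕ) : ℝ) ^ (-σ) := by
      have hsplit : ((N + 1 : ℕ) : ℝ) ^ (1 - σ) =
          ((N + 1 : ℕ) : ℝ) * ((N + 1 : ℕ) : ℝ) ^ (-σ) := by
        rw [sub_eq_add_neg, rpow_add hpos, rpow_one]
      calc (N : ℝ) ^ (1 - σ)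
          = ((N + 1 : ℕ) : ℝ) ^ (1 - σ) * (1 + -1 / ((N + 1 : ℕ) : ℝ)) ^ (1 - σ) := by
            rw [← mul_rpow hpos.le hfac, ← hN]
        _ ≤ ((N + 1 : ℕ) : ℝ) ^ (1 - σ) * (1 + (1 - σ) * (-1 / ((N + 1 : ℕ) : ℝ))) := by
            gcongr
        _ = _ := by rw [hsplit]; field_simp; ring
    rw [le_div_iff₀ hτ] at ih ⊢
    linarith

/-- The completely multiplicative function `n ↦ n ^ (-σ)`. -/
noncomputable def rpowNegHom (σ : ℝ) : ℕ →* ℝ where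
  toFun n := (n : ℝ) ^ (-σ)
  map_one' := by simp
  map_mul' m n := by
    push_cast
    exact Real.mul_rpow (Nat.cast_nonneg m) (Nat.cast_nonneg n)

lemma rpowNegHom_apply (σ : ℝ) (n : ℕ) : rpowNegHom σ n = (n : ℝ) ^ (-σ) := rfl

/-- Rankin's bound for the number of `N`-smooth integers up to `z`. -/
lemma card_smooth_le_rankin {σ z : ℝ} (hσ : 0 < σ) (hz : 0 < z) (N : ℕ) (S : Finset ℕ)
    (hS : ∀ n ∈ S, n ∈ N.smoothNumbers ∧ (n : ℝ) ≤ z) :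
    (S.card : ℝ) ≤ z ^ σ * ∏ p ∈ N.primesBelow, (1 - (p : ℝ) ^ (-σ))⁻¹ := by
  have hlt {p : ℕ} (hp : p.Prime) : ‖rpowNegHom σ p‖ < 1 := by
    rw [rpowNegHom_apply, Real.norm_of_nonneg (by positivity)]
    exact Real.rpow_lt_one_of_one_lt_of_neg (by exact_mod_cast hp.one_lt) (by linarith)
  have hsum :=
    (EulerProduct.summable_and_hasSum_smoothNumbers_prod_primesBelow_geometric hlt N).2
  have hle := sum_le_hasSum (S.subtype (· ∈ N.smoothNumbers))
    (fun n _ => by rw [rpowNegHom_apply]; positivity) hsum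
  simp only [rpowNegHom_apply] at hle
  rw [Finset.sum_subtype_of_mem (fun n : ℕ => (n : ℝ) ^ (-σ)) fun n hn => (hS n hn).1] at hle
  have hcard : (S.card : ℝ) * z ^ (-σ) ≤ ∑ n ∈ S, (n : ℝ) ^ (-σ) := by
    rw [← nsmul_eq_mul]
    refine Finset.card_nsmul_le_sum _ _ _ fun n hn => ?_
    have hn0 : (0 : ℝ) < n := by
      exact_mod_cast Nat.pos_of_ne_zero (Nat.ne_zero_of_mem_smoothNumbers (hS n hn).1)
    exact Real.rpow_le_rpow_of_nonpos hn0 (hS n hn).2 (by linarith)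
  rw [Real.rpow_neg hz.le, ← div_eq_mul_inv, div_le_iff₀ (by positivity)] at hcard
  calc (S.card : ℝ) ≤ (∑ n ∈ S, (n : ℝ) ^ (-σ)) * z ^ σ := hcard
    _ ≤ _ := by rw [mul_comm]; gcongr

lemma inv_one_sub_le_exp {t : ℝ} (ht₀ : 0 ≤ t) (ht : t ≤ 7 / 8) :
    (1 - t)⁻¹ ≤ Real.exp (8 * t) := by
  have hpos : 0 < 1 - t := by linarith
  calc (1 - t)⁻¹ ≤ 8 * t + 1 := by
        rw [inv_le_iff_one_le_mul₀ hpos]; nlinarith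
    _ ≤ _ := Real.add_one_le_exp _

lemma rpow_neg_fifth_le {p : ℕ} (hp : 2 ≤ p) : (p : ℝ) ^ (-(1 / 5 : ℝ)) ≤ 7 / 8 := by
  have hp0 : (0 : ℝ) < p := by positivity
  refine le_of_pow_le_pow_left₀ (n := 5) (by norm_num) (by norm_num) ?_
  rw [← Real.rpow_natCast, ← Real.rpow_mul hp0.le]
  norm_num
  rw [Real.rpow_neg_one, inv_le_comm₀ hp0 (by norm_num)]
  have : (2 : ℝ) ≤ p := by exact_mod_cast hp
  linarith

lemma prod_primesBelow_le_exp (N : ℕ) :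
    ∏ p ∈ N.primesBelow, (1 - (p : ℝ) ^ (-(1 / 5 : ℝ)))⁻¹ ≤
      Real.exp (10 * (N : ℝ) ^ (4 / 5 : ℝ)) := by
  have hprime {p : ℕ} (hp : p ∈ N.primesBelow) : 2 ≤ p :=
    (Nat.prime_of_mem_primesBelow hp).two_le
  calc ∏ p ∈ N.primesBelow, (1 - (p : ℝ) ^ (-(1 / 5 : ℝ)))⁻¹
      ≤ ∏ p ∈ N.primesBelow, Real.exp (8 * (p : ℝ) ^ (-(1 / 5 : ℝ))) := by
        refine Finset.prod_le_prod (fun p hp => ?_) fun p hp => ?_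
        · have := rpow_neg_fifth_le (hprime hp)
          exact inv_nonneg.2 (by linarith)
        · exact inv_one_sub_le_exp (by positivity) (rpow_neg_fifth_le (hprime hp))
    _ = Real.exp (8 * ∑ p ∈ N.primesBelow, (p : ℝ) ^ (-(1 / 5 : ℝ))) := by
        rw [← Real.exp_sum, Finset.mul_sum]
    _ ≤ _ := by
        rw [Real.exp_le_exp]
        have hsub : N.primesBelow ⊆ (Finset.range N).image (· + 1) := fun p hp => by
          have h2 := hprime hp
          have hlt := Nat.lt_of_mem_primesBelow hp
          exact Finset.mem_image.2 ⟨p - 1, Finset.mem_range.2 (by omega), by omega⟩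
        have h1 : ∑ p ∈ N.primesBelow, (p : ℝ) ^ (-(1 / 5 : ℝ)) ≤
            ∑ m ∈ Finset.range N, ((m + 1 : ℕ) : ℝ) ^ (-(1 / 5 : ℝ)) := by
          rw [← Finset.sum_image (f := fun p : ℕ => (p : ℝ) ^ (-(1 / 5 : ℝ)))
            fun a _ b _ h => Nat.succ_injective h]
          exact Finset.sum_le_sum_of_subset_of_nonneg hsub fun _ _ _ => by positivity
        have h2 := sum_rpow_neg_le (σ := 1 / 5) (by norm_num) (by norm_num) N
        norm_num at h1 h2 ⊢
        linarith

lemma mem_smoothNumbers_of_maxPrimeFactor_lt {n N : ℕ} (hn : n ≠ 0)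
    (h : maxPrimeFactor n < N) : n ∈ N.smoothNumbers := by
  refine Nat.mem_smoothNumbers.2 ⟨hn, fun p hp => lt_of_le_of_lt ?_ h⟩
  exact (Finset.le_sup (f := id) (List.mem_toFinset.2 hp)).trans (le_max_right _ _)

/-- If `L` is large compared with `ℓ`, then `(L log L) ^ (4 / 5)` is small compared with `L / ℓ`. -/
lemma rpow_four_fifths_lt {ℓ L N : ℝ} (hℓ : 1 ≤ ℓ) (hL : 7 ^ 28 * (12 * ℓ) ^ 28 ≤ L)
    (hN₀ : 0 ≤ N) (hN : N ≤ 2 * (L * Real.log L)) :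
    N ^ (4 / 5 : ℝ) < L / (600 * ℓ) := by
  have hLpos : 0 < L := lt_of_lt_of_le (by positivity) hL
  obtain ⟨w, hw, hwL⟩ : ∃ w : ℝ, 0 < w ∧ L = w ^ 8 ∧ Real.log L ≤ 8 * w := by
    refine ⟨L ^ (1 / 8 : ℝ), by positivity, ?_, ?_⟩
    · rw [← Real.rpow_natCast, ← Real.rpow_mul hLpos.le]; norm_num
    · have := Real.log_le_rpow_div hLpos.le (ε := 1 / 8) (by norm_num)
      linarith
  obtain ⟨hLw, hlog⟩ := hwL
  have hw4 : 7 ^ 14 * (12 * ℓ) ^ 14 ≤ w ^ 4 := by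
    refine le_of_pow_le_pow_left₀ (n := 2) (by norm_num) (by positivity) ?_
    calc (7 ^ 14 * (12 * ℓ) ^ 14) ^ 2 = 7 ^ 28 * (12 * ℓ) ^ 28 := by ring
      _ ≤ w ^ 8 := hLw ▸ hL
      _ = (w ^ 4) ^ 2 := by ring
  have hbig : 65536 * (600 * ℓ) ^ 5 < w ^ 4 := by
    refine lt_of_lt_of_le ?_ hw4
    have h5 : ℓ ^ 5 ≤ ℓ ^ 14 := pow_le_pow_right₀ hℓ (by norm_num)
    have h14 : 0 < ℓ ^ 14 := by positivity
    rw [mul_pow, mul_pow]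
    norm_num
    linarith
  have hNw : N ≤ 16 * w ^ 9 := by
    calc N ≤ 2 * (L * Real.log L) := hN
      _ ≤ 2 * (L * (8 * w)) := by gcongr
      _ = 16 * w ^ 9 := by rw [hLw]; ring
  refine lt_of_pow_lt_pow_left₀ 5 (by positivity) ?_
  have hpow : (N ^ (4 / 5 : ℝ)) ^ 5 = N ^ 4 := by
    rw [← Real.rpow_natCast, ← Real.rpow_natCast, ← Real.rpow_mul hN₀]; norm_num
  rw [hpow, div_pow, lt_div_iff₀ (by positivity)]
  calc N ^ 4 * (600 * ℓ) ^ 5 ≤ (16 * w ^ 9) ^ 4 * (600 * ℓ) ^ 5 := by gcongr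
    _ = w ^ 36 * (65536 * (600 * ℓ) ^ 5) := by ring
    _ < w ^ 36 * w ^ 4 := by gcongr
    _ = L ^ 5 := by rw [hLw]; ring

lemma pow_le_rpow_log {ℓ : ℝ} (hℓ : 1 ≤ ℓ) :
    (12 * ℓ) ^ 28 ≤ (12 * Real.exp 1 * ℓ) ^ (28 * Real.log (192 * Real.exp 1 * ℓ)) := by
  have he : 1 ≤ Real.exp 1 := Real.one_le_exp (by norm_num)
  have hlog : 1 ≤ Real.log (192 * Real.exp 1 * ℓ) := by
    rw [Real.le_log_iff_exp_le (by positivity)]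
    nlinarith [mul_le_mul he hℓ zero_le_one (by positivity)]
  have hbase : 12 * ℓ ≤ 12 * Real.exp 1 * ℓ := by nlinarith
  calc (12 * ℓ) ^ 28 ≤ (12 * Real.exp 1 * ℓ) ^ 28 := by gcongr
    _ = (12 * Real.exp 1 * ℓ) ^ (28 : ℝ) := by norm_cast
    _ ≤ _ := Real.rpow_le_rpow_of_exponent_le (by linarith) (by linarith)

theorem statement_13 (ℓ x z : ℝ) (hℓ : 1 ≤ ℓ)
    (hx : Real.exp (7 ^ 28 * (12 * Real.exp 1 * ℓ) ^
            (28 * Real.log (192 * Real.exp 1 * ℓ))) ≤ x)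
    (hz : x ^ (1 / (3 * ℓ)) ≤ z) :
    (((Finset.Icc 1 ⌊z⌋₊).filter
        (fun n : ℕ => (maxPrimeFactor n : ℝ) < Real.log x * Real.log (Real.log x))).card : ℝ) <
      z ^ ((1 : ℝ) / 4) := by
  have hx0 : 0 < x := (Real.exp_pos _).trans_le hx
  have hz0 : 0 < z := (Real.rpow_pos_of_pos hx0 _).trans_le hz
  set L := Real.log x
  have hL : 7 ^ 28 * (12 * ℓ) ^ 28 ≤ L := by
    refine le_trans ?_ ((Real.le_log_iff_exp_le hx0).2 hx)
    have := pow_le_rpow_log hℓ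
    gcongr
  have hLe : Real.exp 1 ≤ L := by
    have h1 : (1 : ℝ) ≤ (12 * ℓ) ^ 28 := one_le_pow₀ (by linarith)
    have h2 := Real.exp_one_lt_d9
    norm_num at hL h2
    linarith
  have hL1 : 1 ≤ L := (Real.one_le_exp zero_le_one).trans hLe
  have hlogL : 1 ≤ Real.log L := (Real.le_log_iff_exp_le (by linarith)).2 hLe
  have hy : 1 ≤ L * Real.log L := one_le_mul_of_one_le_of_one_le hL1 hlogL
  set N := ⌈L * Real.log L⌉₊
  have hN : (N : ℝ) ≤ 2 * (L * Real.log L) := by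
    have := Nat.ceil_lt_add_one (zero_le_one.trans hy)
    linarith
  have hlogz : L / (3 * ℓ) ≤ Real.log z := by
    have := Real.log_le_log (Real.rpow_pos_of_pos hx0 _) hz
    rw [Real.log_rpow hx0] at this
    calc L / (3 * ℓ) = 1 / (3 * ℓ) * L := by ring
      _ ≤ _ := this
  have hexp : 10 * (N : ℝ) ^ (4 / 5 : ℝ) < Real.log z * (1 / 20) := by
    have h := rpow_four_fifths_lt hℓ hL (Nat.cast_nonneg N) hN
    have : L / (600 * ℓ) = L / (3 * ℓ) / 200 := by
      rw [div_div]; ring_nf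
    linarith
  have hrankin := card_smooth_le_rankin (σ := 1 / 5) (by norm_num) hz0 N
    ((Finset.Icc 1 ⌊z⌋₊).filter fun n : ℕ => (maxPrimeFactor n : ℝ) < L * Real.log L)
    fun n hn => by
      obtain ⟨hn, hsmooth⟩ := Finset.mem_filter.1 hn
      obtain ⟨hn1, hnz⟩ := Finset.mem_Icc.1 hn
      exact ⟨mem_smoothNumbers_of_maxPrimeFactor_lt (by omega) (Nat.lt_ceil.2 hsmooth),
        (Nat.le_floor_iff hz0.le).1 hnz⟩
  calc _ ≤ z ^ (1 / 5 : ℝ) * ∏ p ∈ N.primesBelow, (1 - (p : ℝ) ^ (-(1 / 5 : ℝ)))⁻¹ := hrankin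
    _ ≤ z ^ (1 / 5 : ℝ) * Real.exp (10 * (N : ℝ) ^ (4 / 5 : ℝ)) := by
        gcongr
        exact prod_primesBelow_le_exp N
    _ < z ^ (1 / 5 : ℝ) * Real.exp (Real.log z * (1 / 20)) := by gcongr
    _ = z ^ (1 / 4 : ℝ) := by
        rw [← Real.rpow_def_of_pos hz0, ← Real.rpow_add hz0]; norm_num
end

section
/- Let T ≥ 1 be a real number and f : ℝ → ℝ a locally integrable T-periodic function. Set μ_f := (1/T) ∫_0^T f(t) dt and m_f := max_{0 ≤ c < 1} |∫_0^{cT} (f(t) − μ_f) dt|. Then for all real numbers a, b with 1 ≤ a ≤ b, one has |∫_a^b f(t)/t dt − μ_f log(b/a)| ≤ 2 m_f / a. -/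
open MeasureTheory Set

theorem MeasureTheory.LocallyIntegrable.intervalIntegrable {g : ℝ → ℝ}
    (hg : LocallyIntegrable g) {a b : ℝ} : IntervalIntegrable g volume a b :=
  (hg.integrableOn_isCompact isCompact_uIcc).intervalIntegrable

theorem absolutelyContinuousOnInterval_inv {a b : ℝ} (ha : 0 < a) (hab : a ≤ b) :
    AbsolutelyContinuousOnInterval (fun x : ℝ => x⁻¹) a b := by
  refine LipschitzOnWith.absolutelyContinuousOnInterval (K := ((a ^ 2)⁻¹).toNNReal) ?_
  rw [uIcc_of_le hab]
  refine Convex.lipschitzOnWith_of_nnnorm_hasDerivWithin_le (convex_Icc a b)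
    (f' := fun x => -(x ^ 2)⁻¹)
    (fun x hx => (hasDerivAt_inv (ha.trans_le hx.1).ne').hasDerivWithinAt) fun x hx => ?_
  have hx0 : 0 < x := ha.trans_le hx.1
  rw [← NNReal.coe_le_coe, coe_nnnorm, Real.coe_toNNReal _ (by positivity), norm_neg,
    Real.norm_of_nonneg (by positivity)]
  have := hx.1
  gcongr

/-- Integration by parts of a locally integrable function against `1 / t`. -/
theorem MeasureTheory.LocallyIntegrable.integral_div_eq {g : ℝ → ℝ} (hg : LocallyIntegrable g)
    {a b : ℝ} (ha : 0 < a) (hab : a ≤ b) :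
    ∫ t in a..b, g t / t = (∫ t in (0 : ℝ)..b, g t) / b - (∫ t in (0 : ℝ)..a, g t) / a +
      ∫ x in a..b, (x ^ 2)⁻¹ * ∫ t in (0 : ℝ)..x, g t := by
  have hF : AbsolutelyContinuousOnInterval (fun x => ∫ t in (0 : ℝ)..x, g t) a b := by
    have hb : 0 ≤ b := ha.le.trans hab
    refine (IntervalIntegrable.absolutelyContinuousOnInterval_intervalIntegral
      (hg.intervalIntegrable (a := 0) (b := b)) left_mem_uIcc).mono ?_
    rw [uIcc_of_le hab, uIcc_of_le hb]
    exact Icc_subset_Icc_left ha.le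
  have hparts := (absolutelyContinuousOnInterval_inv ha hab).integral_mul_deriv_eq_deriv_mul hF
  have hleft : ∫ t in a..b, g t / t =
      ∫ x in a..b, x⁻¹ * deriv (fun x => ∫ t in (0 : ℝ)..x, g t) x := by
    refine intervalIntegral.integral_congr_ae ?_
    filter_upwards [LocallyIntegrable.ae_hasDerivAt_integral hg] with x hx _
    rw [(hx 0).deriv, div_eq_inv_mul]
  rw [hleft, hparts]
  simp only [deriv_inv', neg_mul, intervalIntegral.integral_neg]
  ring

/-- If the primitive of `g` is bounded by `m`, then `∫ t in a..b, g t / t` is at most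
`2 * m / a` in absolute value. -/
theorem MeasureTheory.LocallyIntegrable.abs_integral_div_le {g : ℝ → ℝ}
    (hg : LocallyIntegrable g) {a b m : ℝ} (ha : 0 < a) (hab : a ≤ b)
    (hm : ∀ x, |∫ t in (0 : ℝ)..x, g t| ≤ m) :
    |∫ t in a..b, g t / t| ≤ 2 * m / a := by
  have hb : 0 < b := ha.trans_le hab
  have hne : ∀ x ∈ uIcc a b, x ≠ 0 := fun x hx =>
    (ha.trans_le (uIcc_of_le hab ▸ hx).1).ne'
  have hcont : ContinuousOn (fun x : ℝ => (x ^ 2)⁻¹ * m) (uIcc a b) :=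
    ((continuousOn_id.pow 2).inv₀ fun x hx => pow_ne_zero 2 (hne x hx)).mul continuousOn_const
  have hint : ∫ x in a..b, (x ^ 2)⁻¹ * m = (a⁻¹ - b⁻¹) * m := by
    rw [intervalIntegral.integral_eq_sub_of_hasDerivAt (f := fun x => -(x⁻¹ * m))
      (fun x hx => ?_) hcont.intervalIntegrable]
    · ring
    · simpa using ((hasDerivAt_inv (hne x hx)).mul_const m).fun_neg
  have hrest : |∫ x in a..b, (x ^ 2)⁻¹ * ∫ t in (0 : ℝ)..x, g t| ≤ (a⁻¹ - b⁻¹) * m := by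
    rw [← hint, ← Real.norm_eq_abs]
    refine intervalIntegral.norm_integral_le_of_norm_le hab (.of_forall fun x _ => ?_)
      hcont.intervalIntegrable
    rw [norm_mul, Real.norm_of_nonneg (by positivity), Real.norm_eq_abs]
    exact mul_le_mul_of_nonneg_left (hm x) (by positivity)
  have hend (x : ℝ) (hx : 0 < x) : |(∫ t in (0 : ℝ)..x, g t) / x| ≤ m / x := by
    rw [abs_div, abs_of_pos hx]
    exact div_le_div_of_nonneg_right (hm x) hx.le
  rw [hg.integral_div_eq ha hab]
  calc _ ≤ m / b + m / a + (a⁻¹ - b⁻¹) * m :=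
        (abs_add_le _ _).trans (add_le_add ((abs_sub _ _).trans
          (add_le_add (hend b hb) (hend a ha))) hrest)
    _ = 2 * m / a := by ring

/-- The primitive of a periodic function with zero integral over a period is periodic. -/
theorem Function.Periodic.intervalIntegral_periodic {g : ℝ → ℝ} {T : ℝ}
    (hper : Function.Periodic g T) (hg : LocallyIntegrable g)
    (hzero : ∫ t in (0 : ℝ)..T, g t = 0) :
    Function.Periodic (fun x => ∫ t in (0 : ℝ)..x, g t) T := by
  intro x
  have h := hper.intervalIntegral_add_eq x 0
  rw [zero_add, hzero] at h
  simp only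
  rw [← intervalIntegral.integral_add_adjacent_intervals (b := x) hg.intervalIntegrable
    hg.intervalIntegrable, h, add_zero]

theorem statement_17 (T : ℝ) (hT : 1 ≤ T) (f : ℝ → ℝ)
    (hloc : MeasureTheory.LocallyIntegrable f MeasureTheory.volume)
    (hper : ∀ t : ℝ, f (t + T) = f t)
    (μf mf : ℝ)
    (hμ : μf = (1 / T) * ∫ t in (0 : ℝ)..T, f t)
    (hm : mf = sSup {y : ℝ | ∃ c ∈ Set.Ico (0 : ℝ) 1,
            y = |∫ t in (0 : ℝ)..(c * T), (f t - μf)|})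
    (a b : ℝ) (ha : 1 ≤ a) (hab : a ≤ b) :
    |(∫ t in a..b, f t / t) - μf * Real.log (b / a)| ≤ 2 * mf / a := by
  have hT0 : 0 < T := one_pos.trans_le hT
  have ha0 : 0 < a := one_pos.trans_le ha
  have hne : ∀ x ∈ uIcc a b, x ≠ 0 := fun x hx =>
    (ha0.trans_le (uIcc_of_le hab ▸ hx).1).ne'
  have hg : LocallyIntegrable (fun t => f t - μf) := hloc.sub (locallyIntegrable_const μf)
  have hzero : ∫ t in (0 : ℝ)..T, (f t - μf) = 0 := by
    rw [intervalIntegral.integral_sub hloc.intervalIntegrable (by simp),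
      intervalIntegral.integral_const, hμ, smul_eq_mul]
    field_simp
    ring
  have hgper : Function.Periodic (fun t => f t - μf) T := fun t => by simp [hper t]
  have hFper := hgper.intervalIntegral_periodic hg hzero
  have hFcont : Continuous fun x => ∫ t in (0 : ℝ)..x, (f t - μf) :=
    intervalIntegral.continuous_primitive (fun _ _ => hg.intervalIntegrable) 0
  obtain ⟨C, hC⟩ := isCompact_Icc.exists_bound_of_continuousOn (s := Icc 0 T) hFcont.continuousOn
  have hbound (x : ℝ) : |∫ t in (0 : ℝ)..x, (f t - μf)| ≤ mf := by
    obtain ⟨y, hy, hxy⟩ := hFper.exists_mem_Ico₀ hT0 x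
    rw [hxy, hm]
    refine le_csSup ⟨C, ?_⟩
      ⟨y / T, ⟨div_nonneg hy.1 hT0.le, (div_lt_one hT0).2 hy.2⟩, by rw [div_mul_cancel₀ _ hT0.ne']⟩
    rintro _ ⟨c, hc, rfl⟩
    exact hC _ ⟨mul_nonneg hc.1 hT0.le, mul_le_of_le_one_left hT0.le hc.2.le⟩
  have hsplit : (∫ t in a..b, f t / t) - μf * Real.log (b / a) =
      ∫ t in a..b, (f t - μf) / t := by
    have hinv : ContinuousOn (fun t : ℝ => t⁻¹) (uIcc a b) := continuousOn_id.inv₀ hne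
    simp only [div_eq_mul_inv, sub_mul]
    rw [intervalIntegral.integral_sub (hloc.intervalIntegrable.mul_continuousOn hinv)
      (hinv.intervalIntegrable.const_mul μf), intervalIntegral.integral_const_mul,
      integral_inv fun h => hne 0 h rfl, div_eq_mul_inv]
  rw [hsplit]
  exact hg.abs_integral_div_le ha0 hab hbound
end

section
/- For all real c ∈ [0,1], one has |∫_0^{2cπ} ( |cos(t/2)| − 2/π ) dt| ≤ (2/π)( √(π² − 4) − 2 arccos(2/π) ). -/
open Real

/-- On `[0, π]` the graph of `sin` lies below each of its tangent lines. -/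
theorem sin_sub_sin_le_cos_mul_sub {x θ : ℝ} (hx : x ∈ Set.Icc 0 π) (hθ : θ ∈ Set.Icc 0 π) :
    sin x - sin θ ≤ cos θ * (x - θ) := by
  obtain ⟨hx0, hxπ⟩ := hx
  obtain ⟨hθ0, hθπ⟩ := hθ
  rcases lt_trichotomy x θ with h | rfl | h
  · obtain ⟨ξ, ⟨h1, h2⟩, hξ⟩ := exists_hasDerivAt_eq_slope sin cos h continuous_sin.continuousOn
      fun t _ => hasDerivAt_sin t
    have hcos : cos θ ≤ cos ξ := cos_le_cos_of_nonneg_of_le_pi (by linarith) hθπ h2.le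
    rw [eq_div_iff (by linarith)] at hξ
    nlinarith
  · simp
  · obtain ⟨ξ, ⟨h1, h2⟩, hξ⟩ := exists_hasDerivAt_eq_slope sin cos h continuous_sin.continuousOn
      fun t _ => hasDerivAt_sin t
    have hcos : cos ξ ≤ cos θ := cos_le_cos_of_nonneg_of_le_pi hθ0 (by linarith) h1.le
    rw [eq_div_iff (by linarith)] at hξ
    nlinarith

theorem integral_abs_cos_of_le_pi_div_two {x : ℝ} (hx0 : 0 ≤ x) (hx : x ≤ π / 2) :
    ∫ t in (0 : ℝ)..x, |cos t| = sin x := by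
  have h : ∫ t in (0 : ℝ)..x, |cos t| = ∫ t in (0 : ℝ)..x, cos t := by
    refine intervalIntegral.integral_congr fun t ht => ?_
    rw [Set.uIcc_of_le hx0] at ht
    exact abs_of_nonneg (cos_nonneg_of_neg_pi_div_two_le_of_le (by linarith [ht.1, pi_pos])
      (ht.2.trans hx))
  simp [h]

theorem integral_abs_cos_of_pi_div_two_le {x : ℝ} (hx : π / 2 ≤ x) (hxπ : x ≤ π) :
    ∫ t in (0 : ℝ)..x, |cos t| = 2 - sin x := by
  have h : ∫ t in (π / 2)..x, |cos t| = ∫ t in (π / 2)..x, -cos t := by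
    refine intervalIntegral.integral_congr fun t ht => ?_
    rw [Set.uIcc_of_le hx] at ht
    exact abs_of_nonpos (cos_nonpos_of_pi_div_two_le_of_le ht.1 (by linarith [ht.2, pi_pos]))
  rw [← intervalIntegral.integral_add_adjacent_intervals (b := π / 2)
    (continuous_cos.abs.intervalIntegrable _ _) (continuous_cos.abs.intervalIntegrable _ _),
    integral_abs_cos_of_le_pi_div_two (by positivity) le_rfl, h]
  simp
  ring

theorem sin_sub_two_div_pi_mul_le {x : ℝ} (hx : x ∈ Set.Icc 0 π) :
    2 * (sin x - 2 / π * x) ≤ 2 / π * (√(π ^ 2 - 4) - 2 * arccos (2 / π)) := by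
  have hle : 2 / π ≤ 1 := (div_le_one pi_pos).2 two_le_pi
  have hpos : 0 < 2 / π := by positivity
  have hsqrt : √(1 - (2 / π) ^ 2) = √(π ^ 2 - 4) / π := by
    rw [show 1 - (2 / π) ^ 2 = (π ^ 2 - 4) / π ^ 2 by field_simp; norm_num,
      sqrt_div' _ (by positivity), sqrt_sq pi_pos.le]
  have h := sin_sub_sin_le_cos_mul_sub hx
    (⟨arccos_nonneg _, arccos_le_pi _⟩ : arccos (2 / π) ∈ Set.Icc 0 π)
  rw [cos_arccos (by linarith) hle, sin_arccos, hsqrt] at h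
  have hring : 2 / π * (√(π ^ 2 - 4) - 2 * arccos (2 / π)) =
      2 * (√(π ^ 2 - 4) / π - 2 / π * arccos (2 / π)) := by ring
  rw [hring]
  linarith

theorem statement_18 (c : ℝ) (hc : c ∈ Set.Icc (0 : ℝ) 1) :
    |∫ t in (0 : ℝ)..(2 * c * Real.pi), (|Real.cos (t / 2)| - 2 / Real.pi)| ≤
      2 / Real.pi * (Real.sqrt (Real.pi ^ 2 - 4) - 2 * Real.arccos (2 / Real.pi)) := by
  obtain ⟨hc0, hc1⟩ := hc
  have hπ := pi_pos
  have hy0 : 0 ≤ c * π := by positivity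
  have hyπ : c * π ≤ π := by nlinarith
  have hint : ∫ t in (0 : ℝ)..(2 * c * π), (|cos (t / 2)| - 2 / π) =
      2 * ((∫ t in (0 : ℝ)..(c * π), |cos t|) - 2 / π * (c * π)) := by
    rw [intervalIntegral.integral_comp_div (fun t => |cos t| - 2 / π) two_ne_zero,
      intervalIntegral.integral_sub (continuous_cos.abs.intervalIntegrable _ _)
        intervalIntegrable_const, intervalIntegral.integral_const,
      show 2 * c * π / 2 = c * π by ring, zero_div]
    simp only [smul_eq_mul]
    ring
  rw [hint]
  rcases le_total (c * π) (π / 2) with h | h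
  · rw [integral_abs_cos_of_le_pi_div_two hy0 h, abs_of_nonneg]
    · exact sin_sub_two_div_pi_mul_le ⟨hy0, hyπ⟩
    · linarith [mul_le_sin hy0 h]
  · have hreflect : 2 * (2 - sin (c * π) - 2 / π * (c * π)) =
        -(2 * (sin (π - c * π) - 2 / π * (π - c * π))) := by
      rw [sin_pi_sub]
      field_simp
      ring
    rw [integral_abs_cos_of_pi_div_two_le h hyπ, hreflect, abs_neg, abs_of_nonneg]
    · exact sin_sub_two_div_pi_mul_le ⟨by linarith, by linarith⟩
    · linarith [mul_le_sin (x := π - c * π) (by linarith) (by linarith)]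
end
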